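/- Let A, B, C be a nondegenerate triangle in the Euclidean plane with side lengths a = dist B C, b = dist C A, c = dist A B. Let M₁ = midpoint(B,C), M₂ = midpoint(C,A), M₃ = midpoint(A,B) be the vertices of the medial triangle, O the circumcenter, H the orthocenter, E = midpoint(O, H) the nine-point center, Sp the Spieker point (the incenter of the medial triangle, i.e. the barycentric combination of M₁, M₂, M₃ with weights (a, b, c)), and let M₁' = 2•E − M₁, M₂' = 2•E − M₂, M₃' = 2•E − M₃ be the antipodes of M₁, M₂, M₃ on the circumcircle of the medial triangle. Then there exists a nonzero real polynomial in two variables of total degree at most 3 vanishing at all ten points: M₁, M₂, M₃, M₁', M₂', M₃', Sp, E, O, H. -/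

import Mathlib

/-!
A point `P` has its pedal triangle equal to the cevian triangle of some point exactly when the feet
of the perpendiculars from `P` to the sides satisfy Ceva's condition, which is a cubic condition on
`P`: this is the Darboux cubic of the triangle. It contains the vertices (the feet degenerate), the
orthocenter (altitudes concur) and the incenter (equal tangent lengths), and reflection in the
circumcenter exchanges the two products in Ceva's condition, so that it also contains the
circumcenter and is invariant under this reflection. In the medial triangle of `ABC` the
circumcenter is `E`, the orthocenter is `O`, whose reflection in `E` is `H`, and the incenter is
`Sp`; hence the Darboux cubic of the medial triangle passes through all ten points. The cubic is not
the whole plane: on the perpendicular to `BC` at `B` one product in Ceva's condition vanishes, while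
the other is nonzero at all but two points.
-/

open EuclideanGeometry RealInnerProductSpace

/-- The barycentric combination of three points with weights `u, v, w`. -/
noncomputable def bary (P Q R : EuclideanSpace ℝ (Fin 2)) (u v w : ℝ) :
    EuclideanSpace ℝ (Fin 2) :=
  (u / (u + v + w)) • P + (v / (u + v + w)) • Q + (w / (u + v + w)) • R

/-- Evaluation of a two-variable real polynomial at a point of the plane. -/
noncomputable def mvEval (f : MvPolynomial (Fin 2) ℝ)
    (p : EuclideanSpace ℝ (Fin 2)) : ℝ :=
  MvPolynomial.eval (fun i => p i) f

section InnerProductSpace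

variable {V : Type*} [NormedAddCommGroup V] [InnerProductSpace ℝ V] {A B C O P : V}

lemma inner_sub_sub_add_inner_sub_sub (P B C : V) :
    ⟪P - B, C - B⟫ + ⟪P - C, B - C⟫ = dist B C ^ 2 := by
  rw [dist_eq_norm, ← real_inner_self_eq_norm_sq]
  simp only [inner_sub_left, inner_sub_right]
  ring

lemma two_mul_inner_sub_sub (A B C : V) :
    2 * ⟪A - B, C - B⟫ = dist A B ^ 2 + dist B C ^ 2 - dist C A ^ 2 := by
  simp only [dist_eq_norm, ← real_inner_self_eq_norm_sq, inner_sub_left, inner_sub_right]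
  rw [real_inner_comm B A, real_inner_comm C A, real_inner_comm C B]
  ring

lemma inner_two_smul_sub_sub_of_dist_eq (hBC : dist O B = dist O C) (P : V) :
    ⟪(2 : ℝ) • O - P - B, C - B⟫ = ⟪P - C, B - C⟫ := by
  have hO := two_mul_inner_sub_sub O B C
  rw [dist_comm C O, hBC] at hO
  have hP := inner_sub_sub_add_inner_sub_sub P B C
  simp only [inner_sub_left, inner_smul_left, conj_trivial] at hO hP ⊢
  linarith

/-- The product of the signed distances, each scaled by the length of its side, from `B`, `C`, `A`
to the feet of the perpendiculars from `P` to `BC`, `CA`, `AB`. This is one side of Ceva's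
condition for the pedal triangle of `P`; the other side is `pedalProduct A C B P`. -/
def pedalProduct (A B C P : V) : ℝ :=
  ⟪P - B, C - B⟫ * ⟪P - C, A - C⟫ * ⟪P - A, B - A⟫

lemma pedalProduct_rotate (A B C P : V) : pedalProduct B C A P = pedalProduct A B C P := by
  unfold pedalProduct
  ring

lemma pedalProduct_vertex (A B C : V) : pedalProduct A B C A = 0 := by
  simp [pedalProduct]

lemma pedalProduct_two_smul_sub (hAB : dist O A = dist O B) (hAC : dist O A = dist O C) (P : V) :
    pedalProduct A B C ((2 : ℝ) • O - P) = pedalProduct A C B P := by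
  unfold pedalProduct
  rw [inner_two_smul_sub_sub_of_dist_eq (hAB.symm.trans hAC),
    inner_two_smul_sub_sub_of_dist_eq hAC.symm, inner_two_smul_sub_sub_of_dist_eq hAB]
  ring

/-- `P` lies on the Darboux cubic of `ABC`, the locus of points whose pedal triangle satisfies
Ceva's condition. -/
def OnDarbouxCubic (A B C P : V) : Prop :=
  pedalProduct A B C P = pedalProduct A C B P

namespace OnDarbouxCubic

lemma rotate (h : OnDarbouxCubic A B C P) : OnDarbouxCubic B C A P := by
  rw [OnDarbouxCubic, pedalProduct_rotate, h, pedalProduct_rotate]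

lemma vertex (A B C : V) : OnDarbouxCubic A B C A := by
  rw [OnDarbouxCubic, pedalProduct_vertex, pedalProduct_vertex]

lemma two_smul_sub (h : OnDarbouxCubic A B C P) (hAB : dist O A = dist O B)
    (hAC : dist O A = dist O C) : OnDarbouxCubic A B C ((2 : ℝ) • O - P) := by
  rw [OnDarbouxCubic, pedalProduct_two_smul_sub hAB hAC, pedalProduct_two_smul_sub hAC hAB, h]

lemma circumcenter (hAB : dist O A = dist O B) (hAC : dist O A = dist O C) :
    OnDarbouxCubic A B C O := by
  have h := pedalProduct_two_smul_sub hAB hAC O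
  rwa [two_smul, add_sub_cancel_right] at h

lemma orthocenter (hA : ⟪P - A, C - B⟫ = 0) (hB : ⟪P - B, A - C⟫ = 0) (hC : ⟪P - C, B - A⟫ = 0) :
    OnDarbouxCubic A B C P := by
  have foot {X Y Z : V} (h : ⟪P - X, Z - Y⟫ = 0) : ⟪P - Y, Z - Y⟫ = ⟪X - Y, Z - Y⟫ := by
    rw [← sub_add_sub_cancel P X Y, inner_add_left, h, zero_add]
  have swap {X Y Z : V} (h : ⟪P - X, Z - Y⟫ = 0) : ⟪P - X, Y - Z⟫ = 0 := by
    rw [← neg_sub Z Y, inner_neg_right, h, neg_zero]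
  unfold OnDarbouxCubic pedalProduct
  rw [foot hA, foot hB, foot hC, foot (swap hA), foot (swap hB), foot (swap hC),
    real_inner_comm (C - B), real_inner_comm (A - C), real_inner_comm (B - A)]
  ring

end OnDarbouxCubic

lemma inner_incenter_sub_sub {a b c : ℝ} (ha : a ^ 2 = dist B C ^ 2)
    (hb : b ^ 2 = dist C A ^ 2) (hc : c ^ 2 = dist A B ^ 2) (hs : a + b + c ≠ 0)
    (hP : a • (P - A) + b • (P - B) + c • (P - C) = 0) :
    ⟪P - B, C - B⟫ = a * (c + a - b) / 2 := by
  have expand : (a + b + c) • (P - B) = a • (A - B) + c • (C - B) := by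
    linear_combination (norm := module) hP
  have key : (a + b + c) * ⟪P - B, C - B⟫ = (a + b + c) * (a * (c + a - b) / 2) := by
    rw [← real_inner_smul_left, expand, inner_add_left, real_inner_smul_left,
      real_inner_smul_left, real_inner_self_eq_norm_sq, ← dist_eq_norm, dist_comm C B, ← ha]
    linear_combination a / 2 * (two_mul_inner_sub_sub A B C - ha + hb - hc)
  exact mul_left_cancel₀ hs key

-- The weights are side lengths up to sign, which covers the excenters along with the incenter.
lemma OnDarbouxCubic.incenter {a b c : ℝ} (ha : a ^ 2 = dist B C ^ 2) (hb : b ^ 2 = dist C A ^ 2)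
    (hc : c ^ 2 = dist A B ^ 2) (hs : a + b + c ≠ 0)
    (hP : a • (P - A) + b • (P - B) + c • (P - C) = 0) : OnDarbouxCubic A B C P := by
  have hBC := inner_incenter_sub_sub ha hb hc hs hP
  have hCA := inner_incenter_sub_sub hb hc ha
    (by rwa [add_rotate] at hs) (by rwa [add_rotate] at hP)
  have hAB := inner_incenter_sub_sub hc ha hb
    (by rwa [← add_rotate] at hs) (by rwa [← add_rotate] at hP)
  have hCB := inner_sub_sub_add_inner_sub_sub P B C
  have hAC := inner_sub_sub_add_inner_sub_sub P C A
  have hBA := inner_sub_sub_add_inner_sub_sub P A B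
  rw [hBC, ← ha, ← eq_sub_iff_add_eq'] at hCB
  rw [hCA, ← hb, ← eq_sub_iff_add_eq'] at hAC
  rw [hAB, ← hc, ← eq_sub_iff_add_eq'] at hBA
  rw [OnDarbouxCubic, pedalProduct, pedalProduct, hBC, hCA, hAB, hCB, hAC, hBA]
  ring

lemma exists_inner_eq_zero_and_inner_ne_zero {u v : V} (h : v ∉ Submodule.span ℝ {u}) :
    ∃ n : V, ⟪n, u⟫ = 0 ∧ ⟪n, v⟫ ≠ 0 := by
  contrapose! h
  rw [← Submodule.orthogonal_orthogonal (Submodule.span ℝ {u}), Submodule.mem_orthogonal]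
  intro n hn
  exact h n (Submodule.mem_orthogonal_singleton_iff_inner_left.mp hn)

lemma sub_notMem_span_of_affineIndependent (h : AffineIndependent ℝ ![A, B, C]) :
    C - A ∉ Submodule.span ℝ {C - B} := by
  rw [affineIndependent_iff_not_collinear_set] at h
  contrapose! h
  obtain ⟨t, ht⟩ := Submodule.mem_span_singleton.mp h
  apply collinear_insert_of_mem_affineSpan_pair
  convert AffineMap.lineMap_mem_affineSpan_pair (1 - t) B C using 1
  rw [AffineMap.lineMap_apply_module]
  linear_combination (norm := module) ht

lemma dist_sq_mul_inner_mul_inner_of_onDarbouxCubic {n : V} (hn : ⟪n, C - B⟫ = 0)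
    (h : OnDarbouxCubic A B C (B + n)) :
    dist B C ^ 2 * ⟪n, C - A⟫ * (⟪B - A, C - A⟫ + ⟪n, C - A⟫) = 0 := by
  have hBC : ⟪B + n - B, C - B⟫ = 0 := by rwa [add_sub_cancel_left]
  have hCB : ⟪B + n - C, B - C⟫ = dist B C ^ 2 := by
    rw [← inner_sub_sub_add_inner_sub_sub (B + n), hBC, zero_add]
  have hAB : ⟪B + n - B, A - B⟫ = -⟪n, C - A⟫ := by
    rw [add_sub_cancel_left, ← sub_sub_sub_cancel_left B A C, inner_sub_right, hn, zero_sub]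
  have hCA : ⟪B + n - A, C - A⟫ = ⟪B - A, C - A⟫ + ⟪n, C - A⟫ := by
    rw [add_sub_right_comm, inner_add_left]
  rw [OnDarbouxCubic, pedalProduct, pedalProduct, hBC, hCB, hAB, hCA] at h
  linarith

lemma exists_not_onDarbouxCubic (h : AffineIndependent ℝ ![A, B, C]) :
    ∃ P, ¬ OnDarbouxCubic A B C P := by
  obtain ⟨n, hn, hnA⟩ :=
    exists_inner_eq_zero_and_inner_ne_zero (sub_notMem_span_of_affineIndependent h)
  by_contra! on
  have hBC : dist B C ≠ 0 := dist_ne_zero.mpr (h.injective.ne (show (1 : Fin 3) ≠ 2 by decide))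
  have pos := dist_sq_mul_inner_mul_inner_of_onDarbouxCubic hn (on _)
  have neg := dist_sq_mul_inner_mul_inner_of_onDarbouxCubic (n := -n) (by simpa using hn) (on _)
  simp only [inner_neg_left, mul_eq_zero, pow_eq_zero_iff two_ne_zero, neg_eq_zero, hBC, hnA,
    false_or] at pos neg
  exact hnA (by linarith)

lemma affineIndependent_medial (h : AffineIndependent ℝ ![A, B, C]) :
    AffineIndependent ℝ ![midpoint ℝ B C, midpoint ℝ C A, midpoint ℝ A B] := by
  have points : ![midpoint ℝ B C, midpoint ℝ C A, midpoint ℝ A B] =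
      (Affine.Simplex.medial ⟨![A, B, C], h⟩).points := by
    funext i
    rw [Affine.Simplex.medial_points, Affine.Simplex.faceOppositeCentroid_eq_sum_vsub_vadd]
    fin_cases i <;> simp [Fin.sum_univ_three, midpoint_eq_smul_add] <;> module
  rw [points]
  exact Affine.Simplex.independent _

lemma dist_midpoint_midpoint_same_left (A B C : V) :
    dist (midpoint ℝ A B) (midpoint ℝ A C) = dist B C / 2 := by
  rw [dist_eq_norm, ← vsub_eq_sub, midpoint_vsub_midpoint_same_left, norm_smul, vsub_eq_sub,
    ← dist_eq_norm, invOf_eq_inv, norm_inv, Real.norm_two, inv_mul_eq_div]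

lemma inner_sub_midpoint_midpoint_sub_midpoint (hBC : dist O B = dist O C) (A : V) :
    ⟪O - midpoint ℝ B C, midpoint ℝ A B - midpoint ℝ C A⟫ = 0 := by
  have perp : ⟪O - midpoint ℝ C B, B - C⟫ = 0 :=
    AffineSubspace.mem_perpBisector_iff_inner_eq_zero.mp
      (AffineSubspace.mem_perpBisector_iff_dist_eq.mpr hBC.symm)
  rw [midpoint_comm B C, midpoint_comm C A, ← vsub_eq_sub (midpoint ℝ A B),
    midpoint_vsub_midpoint_same_left, vsub_eq_sub, inner_smul_right, perp, mul_zero]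

lemma dist_ninePointCenter_midpoint {E : V} (hE : (2 : ℝ) • E = A + B + C - O) :
    dist E (midpoint ℝ B C) = dist O A / 2 := by
  have radius : E - midpoint ℝ B C = (2⁻¹ : ℝ) • (A - O) := by
    rw [midpoint_eq_smul_add, invOf_eq_inv]
    linear_combination (norm := module) (2⁻¹ : ℝ) • hE
  rw [dist_eq_norm, radius, norm_smul, ← dist_eq_norm, dist_comm, norm_inv, Real.norm_two,
    inv_mul_eq_div]

lemma onDarbouxCubic_medial_orthocenter (hAB : dist O A = dist O B) (hAC : dist O A = dist O C) :
    OnDarbouxCubic (midpoint ℝ B C) (midpoint ℝ C A) (midpoint ℝ A B) O :=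
  .orthocenter (inner_sub_midpoint_midpoint_sub_midpoint (hAB.symm.trans hAC) A)
    (inner_sub_midpoint_midpoint_sub_midpoint hAC.symm B)
    (inner_sub_midpoint_midpoint_sub_midpoint hAB C)

lemma onDarbouxCubic_medial_incenter {a b c : ℝ} (ha : a ^ 2 = dist B C ^ 2)
    (hb : b ^ 2 = dist C A ^ 2) (hc : c ^ 2 = dist A B ^ 2) (hs : a + b + c ≠ 0)
    (hP : a • (P - midpoint ℝ B C) + b • (P - midpoint ℝ C A) + c • (P - midpoint ℝ A B) = 0) :
    OnDarbouxCubic (midpoint ℝ B C) (midpoint ℝ C A) (midpoint ℝ A B) P := by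
  have side {x : ℝ} {X Y Z : V} (hx : x ^ 2 = dist Y Z ^ 2) :
      (x / 2) ^ 2 = dist (midpoint ℝ Z X) (midpoint ℝ X Y) ^ 2 := by
    rw [midpoint_comm Z X, dist_midpoint_midpoint_same_left, dist_comm, div_pow, div_pow, hx]
  refine .incenter (side ha) (side hb) (side hc) ?_ ?_
  · rw [← add_div, ← add_div]
    exact div_ne_zero hs two_ne_zero
  · linear_combination (norm := module) (2⁻¹ : ℝ) • hP

lemma perimeter_ne_zero (h : AffineIndependent ℝ ![A, B, C]) :
    dist B C + dist C A + dist A B ≠ 0 := by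
  have hBC : 0 < dist B C := dist_pos.mpr (h.injective.ne (show (1 : Fin 3) ≠ 2 by decide))
  positivity

end InnerProductSpace

lemma bary_weighted_sum_eq_zero (P Q R : EuclideanSpace ℝ (Fin 2)) {u v w : ℝ}
    (h : u + v + w ≠ 0) :
    u • (bary P Q R u v w - P) + v • (bary P Q R u v w - Q) + w • (bary P Q R u v w - R) = 0 := by
  have total : (u + v + w) • bary P Q R u v w = u • P + v • Q + w • R := by
    rw [bary, smul_add, smul_add, smul_smul, smul_smul, smul_smul, mul_div_cancel₀ _ h,
      mul_div_cancel₀ _ h, mul_div_cancel₀ _ h]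
  linear_combination (norm := module) total

section EuclideanSpace

open MvPolynomial

variable {ι : Type*} [Fintype ι] {A B C P : EuclideanSpace ℝ ι}

/-- The affine form `P ↦ ⟪P - Q, u⟫` as a polynomial in the coordinates of `P`. -/
noncomputable def innerSubPoly (Q u : EuclideanSpace ℝ ι) : MvPolynomial ι ℝ :=
  ∑ i, MvPolynomial.C (u i) * (X i - MvPolynomial.C (Q i))

lemma eval_innerSubPoly (Q u P : EuclideanSpace ℝ ι) :
    eval (fun i => P i) (innerSubPoly Q u) = ⟪P - Q, u⟫ := by
  simp [innerSubPoly, PiLp.inner_apply]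

lemma totalDegree_innerSubPoly_le (Q u : EuclideanSpace ℝ ι) :
    (innerSubPoly Q u).totalDegree ≤ 1 := by
  refine totalDegree_finsetSum_le fun i _ => (totalDegree_mul _ _).trans ?_
  rw [totalDegree_C, zero_add, ← totalDegree_X (R := ℝ) i]
  exact totalDegree_sub_C_le _ _

/-- `pedalProduct A B C P` as a polynomial in the coordinates of `P`. -/
noncomputable def pedalProductPoly (A B C : EuclideanSpace ℝ ι) : MvPolynomial ι ℝ :=
  innerSubPoly B (C - B) * innerSubPoly C (A - C) * innerSubPoly A (B - A)

lemma eval_pedalProductPoly (A B C P : EuclideanSpace ℝ ι) :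
    eval (fun i => P i) (pedalProductPoly A B C) = pedalProduct A B C P := by
  simp only [pedalProductPoly, pedalProduct, map_mul, eval_innerSubPoly]

lemma totalDegree_pedalProductPoly_le (A B C : EuclideanSpace ℝ ι) :
    (pedalProductPoly A B C).totalDegree ≤ 3 :=
  calc
    _ ≤ _ := (totalDegree_mul _ _).trans (add_le_add_left (totalDegree_mul _ _) _)
    _ ≤ 1 + 1 + 1 := by gcongr <;> exact totalDegree_innerSubPoly_le _ _

/-- The equation of the Darboux cubic of the triangle `ABC`. -/
noncomputable def darbouxCubic (A B C : EuclideanSpace ℝ ι) : MvPolynomial ι ℝ :=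
  pedalProductPoly A B C - pedalProductPoly A C B

lemma eval_darbouxCubic_eq_zero_iff :
    eval (fun i => P i) (darbouxCubic A B C) = 0 ↔ OnDarbouxCubic A B C P := by
  rw [darbouxCubic, map_sub, eval_pedalProductPoly, eval_pedalProductPoly, sub_eq_zero,
    OnDarbouxCubic]

lemma totalDegree_darbouxCubic_le (A B C : EuclideanSpace ℝ ι) :
    (darbouxCubic A B C).totalDegree ≤ 3 :=
  (totalDegree_sub _ _).trans
    (max_le (totalDegree_pedalProductPoly_le A B C) (totalDegree_pedalProductPoly_le A C B))

lemma darbouxCubic_ne_zero (h : AffineIndependent ℝ ![A, B, C]) : darbouxCubic A B C ≠ 0 := by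
  obtain ⟨P, hP⟩ := exists_not_onDarbouxCubic h
  intro h₀
  exact hP (eval_darbouxCubic_eq_zero_iff.mp (by rw [h₀, map_zero]))

theorem stmt3_general {O M₁ M₂ M₃ H E Sp M₁' M₂' M₃' : EuclideanSpace ℝ ι}
    (hABC : AffineIndependent ℝ ![A, B, C]) {a b c : ℝ} (ha : a ^ 2 = dist B C ^ 2)
    (hb : b ^ 2 = dist C A ^ 2) (hc : c ^ 2 = dist A B ^ 2) (hs : a + b + c ≠ 0)
    (hM₁ : M₁ = midpoint ℝ B C) (hM₂ : M₂ = midpoint ℝ C A) (hM₃ : M₃ = midpoint ℝ A B)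
    (hO : dist O A = dist O B ∧ dist O A = dist O C) (hH : H = A + B + C - (2 : ℝ) • O)
    (hE : E = midpoint ℝ O H)
    (hSp : a • (Sp - M₁) + b • (Sp - M₂) + c • (Sp - M₃) = 0)
    (hM₁' : M₁' = (2 : ℝ) • E - M₁) (hM₂' : M₂' = (2 : ℝ) • E - M₂)
    (hM₃' : M₃' = (2 : ℝ) • E - M₃) :
    darbouxCubic M₁ M₂ M₃ ≠ 0 ∧ (darbouxCubic M₁ M₂ M₃).totalDegree ≤ 3 ∧
      ∀ P ∈ ({M₁, M₂, M₃, M₁', M₂', M₃', Sp, E, O, H} : Set (EuclideanSpace ℝ ι)),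
        eval (fun i => P i) (darbouxCubic M₁ M₂ M₃) = 0 := by
  have two_E : (2 : ℝ) • E = O + H := by rw [hE, two_smul, midpoint_add_self]
  have two_E' : (2 : ℝ) • E = A + B + C - O := by rw [two_E, hH]; module
  have d₁ : dist E M₁ = dist O A / 2 := hM₁ ▸ dist_ninePointCenter_midpoint two_E'
  have d₂ : dist E M₂ = dist O B / 2 :=
    hM₂ ▸ dist_ninePointCenter_midpoint (by rw [two_E', add_rotate A])
  have d₃ : dist E M₃ = dist O C / 2 :=
    hM₃ ▸ dist_ninePointCenter_midpoint (by rw [two_E', ← add_rotate C])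
  have h₁₂ : dist E M₁ = dist E M₂ := by rw [d₁, d₂, hO.1]
  have h₁₃ : dist E M₁ = dist E M₃ := by rw [d₁, d₃, hO.2]
  have on₁ := OnDarbouxCubic.vertex M₁ M₂ M₃
  have on₂ := (OnDarbouxCubic.vertex M₂ M₃ M₁).rotate.rotate
  have on₃ := (OnDarbouxCubic.vertex M₃ M₁ M₂).rotate
  have onO : OnDarbouxCubic M₁ M₂ M₃ O := by
    subst hM₁ hM₂ hM₃
    exact onDarbouxCubic_medial_orthocenter hO.1 hO.2
  have onSp : OnDarbouxCubic M₁ M₂ M₃ Sp := by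
    subst hM₁ hM₂ hM₃
    exact onDarbouxCubic_medial_incenter ha hb hc hs hSp
  refine ⟨darbouxCubic_ne_zero ?_, totalDegree_darbouxCubic_le M₁ M₂ M₃, ?_⟩
  · rw [hM₁, hM₂, hM₃]
    exact affineIndependent_medial hABC
  simp only [Set.mem_insert_iff, Set.mem_singleton_iff, forall_eq_or_imp, forall_eq,
    eval_darbouxCubic_eq_zero_iff]
  exact ⟨on₁, on₂, on₃, hM₁' ▸ on₁.two_smul_sub h₁₂ h₁₃, hM₂' ▸ on₂.two_smul_sub h₁₂ h₁₃,
    hM₃' ▸ on₃.two_smul_sub h₁₂ h₁₃, onSp, .circumcenter h₁₂ h₁₃, onO,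
    eq_sub_of_add_eq' two_E.symm ▸ onO.two_smul_sub h₁₂ h₁₃⟩

end EuclideanSpace

theorem stmt3 (A B C O : EuclideanSpace ℝ (Fin 2))
    (hABC : AffineIndependent ℝ ![A, B, C])
    (a b c : ℝ) (ha : a = dist B C) (hb : b = dist C A) (hc : c = dist A B)
    (M₁ M₂ M₃ H E Sp M₁' M₂' M₃' : EuclideanSpace ℝ (Fin 2))
    (hM₁ : M₁ = midpoint ℝ B C) (hM₂ : M₂ = midpoint ℝ C A)
    (hM₃ : M₃ = midpoint ℝ A B)
    (hO : dist O A = dist O B ∧ dist O A = dist O C)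
    (hH : H = A + B + C - (2 : ℝ) • O)
    (hE : E = midpoint ℝ O H)
    (hSp : Sp = bary M₁ M₂ M₃ a b c)
    (hM₁' : M₁' = (2 : ℝ) • E - M₁)
    (hM₂' : M₂' = (2 : ℝ) • E - M₂)
    (hM₃' : M₃' = (2 : ℝ) • E - M₃) :
    ∃ f : MvPolynomial (Fin 2) ℝ, f ≠ 0 ∧ f.totalDegree ≤ 3 ∧
      mvEval f M₁ = 0 ∧ mvEval f M₂ = 0 ∧ mvEval f M₃ = 0 ∧
      mvEval f M₁' = 0 ∧ mvEval f M₂' = 0 ∧ mvEval f M₃' = 0 ∧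
      mvEval f Sp = 0 ∧ mvEval f E = 0 ∧ mvEval f O = 0 ∧ mvEval f H = 0 := by
  have hs : a + b + c ≠ 0 := by simpa only [ha, hb, hc] using perimeter_ne_zero hABC
  refine ⟨darbouxCubic M₁ M₂ M₃, ?_⟩
  simpa [mvEval] using stmt3_general hABC (congrArg (· ^ 2) ha) (congrArg (· ^ 2) hb)
    (congrArg (· ^ 2) hc) hs hM₁ hM₂ hM₃ hO hH hE
    (hSp ▸ bary_weighted_sum_eq_zero M₁ M₂ M₃ hs) hM₁' hM₂' hM₃'
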